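/- For all ε > 0 and δ > 0 there exists a constant C such that if p = p(n) ≥ C n^{-1/2}, then G(n,p) asymptotically almost surely satisfies the following: every Hamiltonian subgraph G' of G(n,p) with more than (1/2 + ε)·n²p/2 edges contains a cycle of length t for all integers t ∈ [δn, (1−δ)n]. -/

import Mathlib

open Filter Topology Classical

/-- Probability that a graph drawn from the binomial random graph `G(n,p)` (each pair of
vertices forming an edge independently with probability `p`) satisfies the predicate `P`. -/
noncomputable def gnpProb (V : Type) [Fintype V] [DecidableEq V] (p : ℝ)
    (P : SimpleGraph V → Prop) : ℝ :=
  ∑ G : SimpleGraph V,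
    if P G then p ^ G.edgeSet.ncard *
      (1 - p) ^ ((Fintype.card V).choose 2 - G.edgeSet.ncard) else 0

/-- `G` contains a cycle of length `t`. -/
def HasCycleLength {V : Type} (G : SimpleGraph V) (t : ℕ) : Prop :=
  ∃ (v : V) (w : G.Walk v v), w.IsCycle ∧ w.length = t

/-!
Let `G'` be a Hamiltonian graph without a cycle of length `τ + 2`, with its vertices placed on
`ZMod n` along a Hamilton cycle. If the endpoint sums of two crossing chords differ by `τ`, the
chords close up with two arcs of the Hamilton cycle of total length `τ` to a cycle of length
`τ + 2`, so `G'` does not contain both.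

Cut `ZMod n` into blocks of length `m = ⌊κ n⌋` and classify an ordered chord `(x, y)` by the block
of `y` and the sum `x + y`. Apart from `O(m n)` exceptions, moving `y` by `m` and increasing the
sum by `τ` sends each chord to a chord such that all members of the two classes cross. This shift
is injective, and it never leads from a class that meets `G'` to another such class; hence the
classes that meet `G'` contain at most half of all chords, up to `O(m n)`. Their union is a
container of `G'` with at most `(1 + ε) n² / 4` edges, and it is determined by the placement of
the vertices and a set of classes. So there are at most `n ^ n * 2 ^ O(n)` containers.

By Chernoff's inequality, a fixed container holds `(1/2 + ε) n² p / 2` edges of `G(n, p)` with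
probability at most `exp (-c p n²)`, which beats the number of containers as soon as
`p ≥ C log n / n`.
-/

section CrossingChords

variable {V : Type} {G : SimpleGraph V}

lemma hasCycleLength_of_closed_seq (w : ℕ → V) {k : ℕ} (hk : 2 ≤ k)
    (hinj : Set.InjOn w (Set.Iic k)) (hadj : ∀ i < k, G.Adj (w i) (w (i + 1)))
    (hclose : G.Adj (w k) (w 0)) :
    HasCycleLength G (k + 1) := by
  have hsucc : ∀ i j : Fin (k + 1), (j - i).val = 1 → G.Adj (w i) (w j) := by
    intro i j hij
    rcases le_or_gt i j with hle | hlt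
    · rw [Fin.coe_sub_iff_le.2 hle] at hij
      rw [show (j : ℕ) = i + 1 by omega]
      exact hadj i (by omega)
    · rw [Fin.coe_sub_iff_lt.2 hlt] at hij
      rw [show (i : ℕ) = k by omega, show (j : ℕ) = 0 by omega]
      exact hclose
  let f : SimpleGraph.cycleGraph (k + 1) →g G :=
    { toFun := fun i => w i
      map_rel' := fun {i j} hij => (SimpleGraph.cycleGraph_adj'.1 hij).elim
        (fun h => (hsucc j i h).symm) (hsucc i j) }
  refine (SimpleGraph.cycleGraph_isContained_iff (by omega)).1 ⟨f.toCopy fun i j hij => ?_⟩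
  exact Fin.ext (hinj (Nat.lt_succ_iff.1 i.2) (Nat.lt_succ_iff.1 j.2) hij)

/-- The cycle is `u 0, …, u a, u c, u (c - 1), …, u b`. -/
lemma hasCycleLength_of_crossing {n : ℕ} (u : ℕ → V) (hinj : Set.InjOn u (Set.Iio n))
    (hadj : ∀ i, G.Adj (u i) (u (i + 1))) {a b c : ℕ} (ha : 0 < a) (hab : a < b) (hbc : b < c)
    (hc : c < n) (h₀b : G.Adj (u 0) (u b)) (hac : G.Adj (u a) (u c)) :
    HasCycleLength G (a + (c - b) + 2) := by
  let pos (i : ℕ) : ℕ := if i ≤ a then i else c + a + 1 - i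
  refine hasCycleLength_of_closed_seq (fun i => u (pos i)) (k := a + (c - b) + 1) (by omega)
    ?_ ?_ ?_
  · have hpos_inj : Set.InjOn pos (Set.Iic (a + (c - b) + 1)) := by
      intro i hi j hj hij
      simp only [Set.mem_Iic, pos] at hi hj hij
      split_ifs at hij <;> omega
    refine hinj.comp hpos_inj fun i hi => ?_
    simp only [Set.mem_Iic, Set.mem_Iio, pos] at hi ⊢
    split_ifs <;> omega
  · intro i hi
    rcases lt_trichotomy i a with hlt | rfl | hgt
    · simpa only [pos, if_pos hlt.le, if_pos (Nat.succ_le_of_lt hlt)] using hadj i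
    · simpa [pos] using hac
    · have hback := (hadj (c + a + 1 - (i + 1))).symm
      rw [show c + a + 1 - (i + 1) + 1 = c + a + 1 - i by omega] at hback
      simpa only [pos, if_neg (show ¬ i ≤ a by omega), if_neg (show ¬ i + 1 ≤ a by omega)]
        using hback
  · simpa only [pos, if_neg (show ¬ a + (c - b) + 1 ≤ a by omega), Nat.zero_le, if_true,
      show c + a + 1 - (a + (c - b) + 1) = b by omega] using h₀b.symm

lemma exists_cyclic_order [Fintype V] [DecidableEq V] {n : ℕ} (hn : 3 ≤ n)
    (hcard : Fintype.card V = n) (hG : G.IsHamiltonian) :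
    ∃ e : ZMod n ≃ V, ∀ i, G.Adj (e i) (e (i + 1)) := by
  obtain ⟨v, p, hp⟩ := hG (by omega)
  obtain ⟨f⟩ := (SimpleGraph.cycleGraph_isContained_iff (by omega)).2
    ⟨v, p, hp.isCycle, hp.length_eq.trans hcard⟩
  obtain ⟨k, rfl⟩ := Nat.exists_eq_add_of_le' (show 2 ≤ n by omega)
  have hbij : Function.Bijective f :=
    (Fintype.bijective_iff_injective_and_card f).2 ⟨f.injective, by simp [hcard]⟩
  refine ⟨Equiv.ofBijective f hbij, fun i : Fin (k + 2) => f.toHom.map_adj ?_⟩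
  exact SimpleGraph.cycleGraph_adj.2 (Or.inr (add_sub_cancel_left i 1))

lemma hasCycleLength_of_zmod_crossing {n : ℕ} (e : ZMod n ≃ V)
    (hadj : ∀ i, G.Adj (e i) (e (i + 1))) (x : ZMod n) {a b c : ℕ} (ha : 0 < a) (hab : a < b)
    (hbc : b < c) (hc : c < n) (hb : G.Adj (e x) (e (x + b)))
    (hac : G.Adj (e (x + a)) (e (x + c))) :
    HasCycleLength G (a + (c - b) + 2) := by
  refine hasCycleLength_of_crossing (fun i : ℕ => e (x + i)) ?_ ?_ ha hab hbc hc
    (by simpa using hb) hac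
  · intro i hi j hj hij
    have hcast : (i : ZMod n) = j := add_left_cancel (e.injective hij)
    rwa [ZMod.natCast_eq_natCast_iff', Nat.mod_eq_of_lt hi, Nat.mod_eq_of_lt hj] at hcast
  · intro i
    simpa [add_assoc] using hadj (x + i)

end CrossingChords

section ChordClasses

variable {n : ℕ}

/-- The length of the forward arc from `x` to `y` of an ordered chord `q = (x, y)` of the cycle
`ZMod n`. -/
def forwardDist (q : ZMod n × ZMod n) : ℕ :=
  (q.2 - q.1).val

/-- Positions that do not pass through `0` when they are moved by `m` in either direction. -/
def IsInner (m : ℕ) (y : ZMod n) : Prop :=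
  m ≤ y.val ∧ y.val + m < n

/-- Ordered chords whose forward arc is longer than `τ`, with margins of a few block lengths `m`
that absorb the variation of the forward arc inside a chord class. -/
def IsLongChord (m τ : ℕ) (q : ZMod n × ZMod n) : Prop :=
  IsInner m q.2 ∧ τ + 2 * m ≤ forwardDist q ∧ forwardDist q + 4 * m < n

/-- Ordered chords whose forward arc is shorter than `τ`, with the same kind of margins as in
`IsLongChord`. -/
def IsShortChord (m τ : ℕ) (q : ZMod n × ZMod n) : Prop :=
  IsInner m q.2 ∧ 4 * m ≤ forwardDist q ∧ forwardDist q + 2 * m ≤ τ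

/-- Moves an ordered chord to one that it crosses and whose endpoints have a sum larger by `τ`. The
second branch is meant for `IsShortChord`; the value at other chords is irrelevant. -/
noncomputable def chordShift (m τ : ℕ) (q : ZMod n × ZMod n) : ZMod n × ZMod n :=
  if IsLongChord m τ q then (q.1 + τ - m, q.2 + m) else (q.1 + τ + m, q.2 - m)

/-- The class of an ordered chord `(x, y)`: the index of the block of length `m` that contains `y`,
together with the sum `x + y`. -/
def chordClass [NeZero n] (m : ℕ) (q : ZMod n × ZMod n) : Fin (n / m + 1) × ZMod n :=
  (⟨q.2.val / m, Nat.lt_succ_of_le (Nat.div_le_div_right (ZMod.val_lt _).le)⟩, q.1 + q.2)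

lemma val_add_of_add_lt {y : ZMod n} {m : ℕ} (h : y.val + m < n) : (y + m).val = y.val + m := by
  have hm : (m : ZMod n).val = m := ZMod.val_cast_of_lt (by omega)
  rw [ZMod.val_add_of_lt (by omega), hm]

lemma chordShift_injOn {m : ℕ} (hm : 0 < m) (τ : ℕ) :
    Set.InjOn (chordShift (n := n) m τ) {q | IsLongChord m τ q ∨ IsShortChord m τ q} := by
  have hne : ∀ q q' : ZMod n × ZMod n, IsLongChord m τ q → IsShortChord m τ q' →
      (q.1 + τ - m, q.2 + m) ≠ (q'.1 + τ + m, q'.2 - m) := by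
    intro q q' hq hq' heq
    obtain ⟨hfst, hsnd⟩ := Prod.ext_iff.1 heq
    have hdist : forwardDist q' = forwardDist q + 4 * m := by
      rw [forwardDist, forwardDist, ← val_add_of_add_lt hq.2.2]
      push_cast
      congr 1
      linear_combination hfst - hsnd
    have := hq.2.1
    have := hq'.2.2
    omega
  intro q hq q' hq' heq
  unfold chordShift at heq
  split_ifs at heq with hlong hlong' hlong'
  · simpa [Prod.ext_iff] using heq
  · exact (hne q q' hlong (hq'.resolve_left hlong') heq).elim
  · exact (hne q' q hlong' (hq.resolve_left hlong) heq.symm).elim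
  · simpa [Prod.ext_iff] using heq

variable [NeZero n]

lemma val_sub_of_le_val {y : ZMod n} {m : ℕ} (h : m ≤ y.val) : (y - m).val = y.val - m := by
  have hm : (m : ZMod n).val = m := ZMod.val_cast_of_lt (h.trans_lt (ZMod.val_lt y))
  rw [ZMod.val_sub (by omega), hm]

lemma chordClass_eq_iff {m : ℕ} {q q' : ZMod n × ZMod n} :
    chordClass m q = chordClass m q' ↔
      q.2.val / m = q'.2.val / m ∧ q.1 + q.2 = q'.1 + q'.2 := by
  simp [chordClass]

/-- The natural number `l` represents `q'.2 - q'.1` but need not be smaller than `n`. -/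
lemma exists_dist_of_chordClass_eq {m : ℕ} (hm : 0 < m) {q q' : ZMod n × ZMod n}
    (h : chordClass m q' = chordClass m q) (hq : 2 * m ≤ forwardDist q) :
    ∃ l : ℕ, (l : ZMod n) = q'.2 - q'.1 ∧ forwardDist q < l + 2 * m ∧
      l < forwardDist q + 2 * m := by
  obtain ⟨hblock, hsum⟩ := chordClass_eq_iff.1 h
  have hq_mod := Nat.div_add_mod q.2.val m
  have hq'_mod := Nat.div_add_mod q'.2.val m
  have hq_lt := Nat.mod_lt q.2.val hm
  have hq'_lt := Nat.mod_lt q'.2.val hm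
  rw [hblock] at hq'_mod
  obtain ⟨l, hl⟩ : ∃ l, l + 2 * q.2.val = forwardDist q + 2 * q'.2.val :=
    ⟨forwardDist q + 2 * q'.2.val - 2 * q.2.val, by omega⟩
  refine ⟨l, ?_, by omega, by omega⟩
  have hl_cast : (l : ZMod n) + 2 * q.2 = (q.2 - q.1) + 2 * q'.2 := by
    simpa [forwardDist] using congrArg (Nat.cast : ℕ → ZMod n) hl
  linear_combination hl_cast + hsum

lemma exists_eq_add_of_val_div_eq_succ {m : ℕ} (hm : 0 < m) {y z : ZMod n}
    (h : z.val / m = y.val / m + 1) : ∃ β : ℕ, 0 < β ∧ β < 2 * m ∧ z = y + β := by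
  have hy_mod := Nat.div_add_mod y.val m
  have hz_mod := Nat.div_add_mod z.val m
  have hy_lt := Nat.mod_lt y.val hm
  have hz_lt := Nat.mod_lt z.val hm
  rw [h, Nat.mul_succ] at hz_mod
  refine ⟨z.val - y.val, by omega, by omega, ?_⟩
  rw [Nat.cast_sub (by omega)]
  simp

variable {V : Type} {G : SimpleGraph V}

lemma hasCycleLength_of_isLongChord (e : ZMod n ≃ V) (hadj : ∀ i, G.Adj (e i) (e (i + 1)))
    {m τ : ℕ} (hm : 0 < m) (hτ : 2 * m ≤ τ) {q q₀ q₁ : ZMod n × ZMod n}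
    (hq : IsLongChord m τ q) (h₀ : chordClass m q₀ = chordClass m q)
    (h₁ : chordClass m q₁ = chordClass m (chordShift m τ q))
    (hadj₀ : G.Adj (e q₀.1) (e q₀.2)) (hadj₁ : G.Adj (e q₁.1) (e q₁.2)) :
    HasCycleLength G (τ + 2) := by
  rw [chordShift, if_pos hq] at h₁
  obtain ⟨⟨-, hinner⟩, hlong, hmargin⟩ := hq
  obtain ⟨l, hl, hlt, hgt⟩ := exists_dist_of_chordClass_eq hm h₀ (by omega)
  obtain ⟨hblock₀, hsum₀⟩ := chordClass_eq_iff.1 h₀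
  obtain ⟨hblock₁, hsum₁⟩ := chordClass_eq_iff.1 h₁
  rw [val_add_of_add_lt hinner, Nat.add_div_right _ hm, ← hblock₀] at hblock₁
  obtain ⟨β, hβ_pos, hβ_lt, hβ⟩ := exists_eq_add_of_val_div_eq_succ hm hblock₁
  have hb : q₀.1 + (l : ZMod n) = q₀.2 := by rw [hl]; ring
  have ha : q₀.1 + ((τ - β : ℕ) : ZMod n) = q₁.1 := by
    rw [Nat.cast_sub (by omega)]
    linear_combination hsum₀ - hsum₁ + hβ
  have hc : q₀.1 + ((l + β : ℕ) : ZMod n) = q₁.2 := by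
    push_cast
    linear_combination hb - hβ
  rw [show τ + 2 = τ - β + (l + β - l) + 2 by omega]
  exact hasCycleLength_of_zmod_crossing e hadj q₀.1 (by omega) (by omega) (by omega) (by omega)
    (by rwa [hb]) (by rwa [ha, hc])

lemma hasCycleLength_of_isShortChord (e : ZMod n ≃ V) (hadj : ∀ i, G.Adj (e i) (e (i + 1)))
    {m τ : ℕ} (hm : 0 < m) (hτ : τ + 2 * m ≤ n) {q q₀ q₁ : ZMod n × ZMod n}
    (hq : IsShortChord m τ q) (h₀ : chordClass m q₀ = chordClass m q)
    (h₁ : chordClass m q₁ = chordClass m (chordShift m τ q))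
    (hadj₀ : G.Adj (e q₀.1) (e q₀.2)) (hadj₁ : G.Adj (e q₁.1) (e q₁.2)) :
    HasCycleLength G (τ + 2) := by
  obtain ⟨⟨hinner, -⟩, hmargin, hshort⟩ := hq
  rw [chordShift, if_neg fun hlong => by have := hlong.2.1; omega] at h₁
  obtain ⟨l, hl, hlt, hgt⟩ := exists_dist_of_chordClass_eq hm h₀ (by omega)
  obtain ⟨hblock₀, hsum₀⟩ := chordClass_eq_iff.1 h₀
  obtain ⟨hblock₁, hsum₁⟩ := chordClass_eq_iff.1 h₁
  have hblock : q₀.2.val / m = q₁.2.val / m + 1 := by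
    rw [hblock₀, hblock₁, val_sub_of_le_val hinner, ← Nat.add_div_right _ hm,
      Nat.sub_add_cancel hinner]
  obtain ⟨β, hβ_pos, hβ_lt, hβ⟩ := exists_eq_add_of_val_div_eq_succ hm hblock
  have hb : q₀.1 + (l : ZMod n) = q₀.2 := by rw [hl]; ring
  have ha : q₀.1 + ((l - β : ℕ) : ZMod n) = q₁.2 := by
    rw [Nat.cast_sub (by omega)]
    linear_combination hb + hβ
  have hc : q₀.1 + ((τ + β : ℕ) : ZMod n) = q₁.1 := by
    push_cast
    linear_combination hsum₀ - hsum₁ - hβ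
  rw [show τ + 2 = l - β + (τ + β - l) + 2 by omega]
  exact hasCycleLength_of_zmod_crossing e hadj q₀.1 (by omega) (by omega) (by omega) (by omega)
    (by rwa [hb]) (by rw [ha, hc]; exact hadj₁.symm)

lemma hasCycleLength_of_chordShift (e : ZMod n ≃ V) (hadj : ∀ i, G.Adj (e i) (e (i + 1)))
    {m τ : ℕ} (hm : 0 < m) (hτ : 2 * m ≤ τ) (hτn : τ + 2 * m ≤ n) {q q₀ q₁ : ZMod n × ZMod n}
    (hq : IsLongChord m τ q ∨ IsShortChord m τ q) (h₀ : chordClass m q₀ = chordClass m q)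
    (h₁ : chordClass m q₁ = chordClass m (chordShift m τ q))
    (hadj₀ : G.Adj (e q₀.1) (e q₀.2)) (hadj₁ : G.Adj (e q₁.1) (e q₁.2)) :
    HasCycleLength G (τ + 2) :=
  hq.elim (fun hlong => hasCycleLength_of_isLongChord e hadj hm hτ hlong h₀ h₁ hadj₀ hadj₁)
    (fun hshort => hasCycleLength_of_isShortChord e hadj hm hτn hshort h₀ h₁ hadj₀ hadj₁)

lemma card_snd_mem_le {α β : Type*} [Fintype α] [Fintype β] (φ : α × β → ℕ)
    (hφ : Function.Injective fun q => (q.1, φ q)) (s : Finset ℕ) :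
    (Finset.univ.filter fun q => φ q ∈ s).card ≤ Fintype.card α * s.card := by
  rw [← Finset.card_univ, ← Finset.card_product]
  exact Finset.card_le_card_of_injOn _ (fun q hq => by simpa using hq) hφ.injOn

lemma card_not_long_or_short (m τ : ℕ) :
    (Finset.univ.filter fun q : ZMod n × ZMod n =>
      ¬(IsLongChord m τ q ∨ IsShortChord m τ q)).card ≤ 14 * m * n := by
  let Y : Finset ℕ := Finset.range m ∪ Finset.Ico (n - m) n
  let L : Finset ℕ := Finset.range (4 * m) ∪ Finset.Ico (τ + 1 - 2 * m) (τ + 2 * m) ∪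
    Finset.Ico (n - 4 * m) n
  have hY : Y.card ≤ 2 * m := by
    refine (Finset.card_union_le _ _).trans ?_
    simp only [Finset.card_range, Nat.card_Ico]
    omega
  have hL : L.card ≤ 12 * m := by
    refine (Finset.card_union_le _ _).trans
      (Nat.add_le_add_right (Finset.card_union_le _ _) _ |>.trans ?_)
    simp only [Finset.card_range, Nat.card_Ico]
    omega
  have hval : Function.Injective fun q : ZMod n × ZMod n => (q.1, q.2.val) := by
    intro q q' h
    simpa [Prod.ext_iff, (ZMod.val_injective n).eq_iff] using h
  have hdist : Function.Injective fun q : ZMod n × ZMod n => (q.1, forwardDist q) := by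
    intro q q' h
    obtain ⟨hfst, hsub⟩ : q.1 = q'.1 ∧ q.2 - q.1 = q'.2 - q'.1 := by
      simpa [forwardDist, (ZMod.val_injective n).eq_iff] using h
    exact Prod.ext hfst (by linear_combination hsub + hfst)
  calc _ ≤ (Finset.univ.filter (fun q : ZMod n × ZMod n => q.2.val ∈ Y) ∪
        Finset.univ.filter (fun q : ZMod n × ZMod n => forwardDist q ∈ L)).card := by
        refine Finset.card_le_card fun q hq => ?_
        replace hq := (Finset.mem_filter.1 hq).2
        have hval_lt := ZMod.val_lt q.2
        have hdist_lt : forwardDist q < n := ZMod.val_lt _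
        simp only [IsLongChord, IsShortChord, IsInner, Finset.mem_filter, Finset.mem_univ,
          true_and, Finset.mem_union, Finset.mem_range, Finset.mem_Ico, Y, L] at hq ⊢
        omega
    _ ≤ n * Y.card + n * L.card := by
        refine (Finset.card_union_le _ _).trans ?_
        simpa only [ZMod.card] using
          Nat.add_le_add (card_snd_mem_le _ hval Y) (card_snd_mem_le _ hdist L)
    _ ≤ n * (2 * m) + n * (12 * m) := by gcongr
    _ = 14 * m * n := by ring

end ChordClasses

section Containers

lemma two_mul_card_le_of_injOn {α : Type*} [Fintype α] [DecidableEq α] {f : α → α}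
    {U B : Finset α} (hinj : Set.InjOn f (U \ B : Finset α)) (hdisj : ∀ x ∈ U \ B, f x ∉ U) :
    2 * U.card ≤ Fintype.card α + B.card := by
  have himage : U.card + (U \ B).card ≤ Fintype.card α := by
    rw [← Finset.card_image_of_injOn hinj, ← Finset.card_union_of_disjoint]
    · exact Finset.card_le_univ _
    · rw [Finset.disjoint_right]
      exact Finset.forall_mem_image.2 hdisj
  have := Finset.le_card_sdiff B U
  omega

variable {n : ℕ} [NeZero n] {V : Type} {G : SimpleGraph V}

/-- The classes that contain an edge of `G`, the vertices being placed on `ZMod n` by `e`. -/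
noncomputable def edgeClasses (m : ℕ) (e : ZMod n ≃ V) (G : SimpleGraph V) :
    Finset (Fin (n / m + 1) × ZMod n) :=
  (Finset.univ.filter fun q => G.Adj (e q.1) (e q.2)).image (chordClass m)

/-- All pairs of vertices for which both ordered chords have their class in `A`, where `pos` gives
the positions of the vertices. -/
def containerGraph (m : ℕ) (pos : V → ZMod n) (A : Finset (Fin (n / m + 1) × ZMod n)) :
    SimpleGraph V where
  Adj a b := a ≠ b ∧ chordClass m (pos a, pos b) ∈ A ∧ chordClass m (pos b, pos a) ∈ A
  symm := ⟨fun _ _ h => ⟨h.1.symm, h.2.2, h.2.1⟩⟩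
  loopless := ⟨fun _ h => h.1 rfl⟩

lemma chordClass_mem_edgeClasses (m : ℕ) (e : ZMod n ≃ V) {a b : V} (h : G.Adj a b) :
    chordClass m (e.symm a, e.symm b) ∈ edgeClasses m e G :=
  Finset.mem_image_of_mem _ (by simpa using h)

lemma le_containerGraph_edgeClasses (m : ℕ) (e : ZMod n ≃ V) (G : SimpleGraph V) :
    G ≤ containerGraph m e.symm (edgeClasses m e G) :=
  fun _ _ h => ⟨h.ne, chordClass_mem_edgeClasses m e h, chordClass_mem_edgeClasses m e h.symm⟩

lemma two_mul_ncard_edgeSet_containerGraph_le (m : ℕ) {pos : V → ZMod n}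
    (hpos : Function.Injective pos) (A : Finset (Fin (n / m + 1) × ZMod n)) :
    2 * (containerGraph m pos A).edgeSet.ncard ≤
      (Finset.univ.filter fun q => chordClass m q ∈ A).card := by
  have := Fintype.ofInjective pos hpos
  rw [← SimpleGraph.coe_edgeFinset, Set.ncard_coe_finset, SimpleGraph.two_mul_card_edgeFinset]
  refine Finset.card_le_card_of_injOn (Prod.map pos pos) (fun r hr => ?_) (hpos.prodMap hpos).injOn
  have hr : (containerGraph m pos A).Adj r.1 r.2 := by simpa using hr
  exact Finset.mem_coe.2 (Finset.mem_filter.2 ⟨Finset.mem_univ _, hr.2.1⟩)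

lemma two_mul_card_mem_edgeClasses_le {m τ : ℕ} (hm : 0 < m) (hτ : 2 * m ≤ τ)
    (hτn : τ + 2 * m ≤ n) (e : ZMod n ≃ V) (hadj : ∀ i, G.Adj (e i) (e (i + 1)))
    (hcyc : ¬ HasCycleLength G (τ + 2)) :
    2 * (Finset.univ.filter fun q => chordClass m q ∈ edgeClasses m e G).card ≤
      n ^ 2 + 14 * m * n := by
  let U := Finset.univ.filter fun q => chordClass m q ∈ edgeClasses m e G
  let B := Finset.univ.filter fun q : ZMod n × ZMod n =>
    ¬(IsLongChord m τ q ∨ IsShortChord m τ q)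
  have hgood : ∀ q ∈ U \ B, IsLongChord m τ q ∨ IsShortChord m τ q := fun q hq => by
    simpa only [B, Finset.mem_filter, Finset.mem_univ, true_and, not_not] using
      (Finset.mem_sdiff.1 hq).2
  have hoccupied : ∀ q ∈ U, ∃ q₀ : ZMod n × ZMod n, G.Adj (e q₀.1) (e q₀.2) ∧
      chordClass m q₀ = chordClass m q := fun q hq => by
    simpa only [edgeClasses, Finset.mem_image, Finset.mem_filter, Finset.mem_univ, true_and] using
      (Finset.mem_filter.1 hq).2
  have hshift : ∀ q ∈ U \ B, chordShift m τ q ∉ U := by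
    intro q hq hq'
    obtain ⟨q₀, hadj₀, h₀⟩ := hoccupied q (Finset.mem_sdiff.1 hq).1
    obtain ⟨q₁, hadj₁, h₁⟩ := hoccupied _ hq'
    exact hcyc (hasCycleLength_of_chordShift e hadj hm hτ hτn (hgood q hq) h₀ h₁ hadj₀ hadj₁)
  calc 2 * U.card ≤ Fintype.card (ZMod n × ZMod n) + B.card :=
        two_mul_card_le_of_injOn ((chordShift_injOn hm τ).mono hgood) hshift
    _ ≤ n ^ 2 + 14 * m * n := by
        rw [Fintype.card_prod, ZMod.card, ← sq]
        exact Nat.add_le_add_left (card_not_long_or_short m τ) _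

variable [Fintype V] [DecidableEq V]

lemma exists_container (hn : 3 ≤ n) (hcard : Fintype.card V = n) {m τ : ℕ} (hm : 0 < m)
    (hτ : 2 * m ≤ τ) (hτn : τ + 2 * m ≤ n) (hG : G.IsHamiltonian)
    (hcyc : ¬ HasCycleLength G (τ + 2)) :
    ∃ (pos : V → ZMod n) (A : Finset (Fin (n / m + 1) × ZMod n)),
      G ≤ containerGraph m pos A ∧
      4 * (containerGraph m pos A).edgeSet.ncard ≤ n ^ 2 + 14 * m * n := by
  obtain ⟨e, hadj⟩ := exists_cyclic_order hn hcard hG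
  refine ⟨e.symm, edgeClasses m e G, le_containerGraph_edgeClasses m e G, ?_⟩
  have hedges := two_mul_ncard_edgeSet_containerGraph_le m e.symm.injective (edgeClasses m e G)
  have hchords := two_mul_card_mem_edgeClasses_le hm hτ hτn e hadj hcyc
  omega

lemma exists_container_family (hn : 3 ≤ n) (hcard : Fintype.card V = n) {m : ℕ} (hm : 0 < m) :
    ∃ F : Finset (SimpleGraph V), F.card ≤ n ^ n * 2 ^ ((n / m + 1) * n) ∧
      (∀ H ∈ F, 4 * H.edgeSet.ncard ≤ n ^ 2 + 14 * m * n) ∧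
      ∀ τ, 2 * m ≤ τ → τ + 2 * m ≤ n → ∀ G : SimpleGraph V, G.IsHamiltonian →
        ¬ HasCycleLength G (τ + 2) → ∃ H ∈ F, G ≤ H := by
  let container (r : (V → ZMod n) × Finset (Fin (n / m + 1) × ZMod n)) := containerGraph m r.1 r.2
  refine ⟨(Finset.univ.image container).filter fun H => 4 * H.edgeSet.ncard ≤ n ^ 2 + 14 * m * n,
    ?_, fun H hH => (Finset.mem_filter.1 hH).2, fun τ hτ hτn G hG hcyc => ?_⟩
  · refine (Finset.card_filter_le _ _).trans (Finset.card_image_le.trans_eq ?_)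
    simp [ZMod.card, hcard]
  · obtain ⟨pos, A, hle, hedges⟩ := exists_container hn hcard hm hτ hτn hG hcyc
    exact ⟨_, Finset.mem_filter.2 ⟨Finset.mem_image_of_mem container (Finset.mem_univ (pos, A)),
      hedges⟩, hle⟩

end Containers

section RandomGraph

open MeasureTheory ProbabilityTheory unitInterval
open scoped SimpleGraph

lemma integral_prod_setBernoulli {ι : Type*} [Fintype ι] (u : Set ι) (p : I)
    (f : ι → Prop → ℝ) :
    ∫ s, ∏ i, f i (i ∈ s) ∂setBer(u, p) =
      ∏ i, (p * f i (i ∈ u) + (1 - p) * f i False) := by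
  have hmeas : Measurable fun s : Set ι => ∏ i, f i (i ∈ s) :=
    Finset.measurable_prod _ fun i _ => (measurable_of_countable (f i)).comp (measurable_set_mem i)
  rw [setBernoulli_eq_map, integral_map (by fun_prop) hmeas.aestronglyMeasurable,
    Measure.infinitePi_eq_pi]
  simp only [Set.mem_ofPred_eq]
  rw [integral_fintype_prod_eq_prod]
  refine Finset.prod_congr rfl fun i _ => ?_
  rw [integral_add_measure (by simp) (by simp)]
  simp [integral_smul_nnreal_measure, NNReal.smul_def]

lemma mgf_ncard_inter_setBernoulli {ι : Type*} [Finite ι] {u T : Set ι} (hT : T ⊆ u) (p : I)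
    (t : ℝ) :
    mgf (fun s : Set ι => ((s ∩ T).ncard : ℝ)) setBer(u, p) t =
      (p * Real.exp t + (1 - p)) ^ T.ncard := by
  have := Fintype.ofFinite ι
  have hprod : ∀ s : Set ι, Real.exp (t * (s ∩ T).ncard) =
      ∏ i, if i ∈ T ∧ i ∈ s then Real.exp t else 1 := by
    intro s
    rw [Finset.prod_ite, Finset.prod_const, Finset.prod_const_one, mul_one, mul_comm,
      Real.exp_nat_mul, Set.ncard_eq_toFinset_card']
    congr 2
    ext i
    simp [and_comm]
  rw [mgf, funext hprod,
    integral_prod_setBernoulli u p fun i P => if i ∈ T ∧ P then Real.exp t else 1]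
  calc _ = ∏ i, if i ∈ T then p * Real.exp t + (1 - p) else 1 := by
        refine Finset.prod_congr rfl fun i _ => ?_
        by_cases hi : i ∈ T
        · simp [hi, hT hi]
        · simp [hi]
    _ = (p * Real.exp t + (1 - p)) ^ T.ncard := by
        rw [Finset.prod_ite, Finset.prod_const, Finset.prod_const_one, mul_one,
          Set.ncard_eq_toFinset_card']
        congr 2
        ext i
        simp

instance {V : Type*} [Countable V] : MeasurableSingletonClass (SimpleGraph V) where
  measurableSet_singleton G := by
    simpa [Set.preimage, SimpleGraph.edgeSet_inj] using
      SimpleGraph.measurable_edgeSet (measurableSet_singleton G.edgeSet)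

lemma gnpProb_eq_binomialRandom_real {V : Type} [Fintype V] [DecidableEq V] (p : I)
    (P : SimpleGraph V → Prop) :
    gnpProb V p P = G(V, p).real {G | P G} := by
  rw [gnpProb, ← Finset.sum_filter, ← Finset.coe_filter_univ, ← sum_measureReal_singleton]
  simp [measureReal_def]

lemma gnpProb_le_one {V : Type} [Fintype V] [DecidableEq V] (p : I) (P : SimpleGraph V → Prop) :
    gnpProb V p P ≤ 1 := by
  rw [gnpProb_eq_binomialRandom_real]
  exact measureReal_le_one

variable {V : Type*} [Finite V]

lemma mgf_ncard_edgeSet_inf_binomialRandom (p : I) (H : SimpleGraph V) (t : ℝ) :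
    mgf (fun G : SimpleGraph V => ((G ⊓ H).edgeSet.ncard : ℝ)) G(V, p) t =
      (p * Real.exp t + (1 - p)) ^ H.edgeSet.ncard := by
  have hdiag : H.edgeSet ⊆ Sym2.diagSetᶜ := by simp
  have hedges : ∀ s : Set (Sym2 V),
      (SimpleGraph.fromEdgeSet s ⊓ H).edgeSet = s ∩ H.edgeSet := by
    intro s
    rw [SimpleGraph.edgeSet_inf, SimpleGraph.edgeSet_fromEdgeSet]
    ext e
    simpa using fun he _ => hdiag he
  rw [← mgf_ncard_inter_setBernoulli hdiag, SimpleGraph.binomialRandom_eq_map,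
    mgf_map (by fun_prop) (by fun_prop)]
  simp only [Function.comp_def, hedges]

lemma binomialRandom_real_le_ncard_edgeSet_inf {η M : ℝ} (hη : 0 ≤ η) (hη2 : η ≤ 2) (p : I)
    {H : SimpleGraph V} (hH : H.edgeSet.ncard ≤ M) :
    G(V, p).real {G | (1 + η) * (p * M) ≤ ((G ⊓ H).edgeSet.ncard : ℝ)} ≤
      Real.exp (-(η ^ 2 / 4 * (p * M))) := by
  have hp : (0 : ℝ) ≤ p := p.2.1
  have hM : 0 ≤ M := (Nat.cast_nonneg _).trans hH
  have hexp : Real.exp (η / 2) - 1 ≤ η / 2 + (η / 2) ^ 2 := by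
    have := (abs_le.1 (Real.abs_exp_sub_one_sub_id_le (x := η / 2)
      (by rw [abs_of_nonneg (by positivity)]; linarith))).2
    linarith
  have hone : 0 ≤ Real.exp (η / 2) - 1 := by
    linarith [Real.add_one_le_exp (η / 2)]
  have hmgf : mgf (fun G : SimpleGraph V => ((G ⊓ H).edgeSet.ncard : ℝ)) G(V, p) (η / 2) ≤
      Real.exp ((η / 2 + (η / 2) ^ 2) * (p * M)) :=
    calc _ = (p * (Real.exp (η / 2) - 1) + 1) ^ H.edgeSet.ncard := by
          rw [mgf_ncard_edgeSet_inf_binomialRandom]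
          ring_nf
      _ ≤ Real.exp (p * (Real.exp (η / 2) - 1)) ^ H.edgeSet.ncard := by
          gcongr
          exact Real.add_one_le_exp _
      _ = Real.exp (H.edgeSet.ncard * (p * (Real.exp (η / 2) - 1))) :=
          (Real.exp_nat_mul _ _).symm
      _ ≤ Real.exp ((η / 2 + (η / 2) ^ 2) * (p * M)) := by
          rw [Real.exp_le_exp]
          calc _ ≤ M * (p * (η / 2 + (η / 2) ^ 2)) := by gcongr
            _ = _ := by ring
  calc _ ≤ Real.exp (-(η / 2) * ((1 + η) * (p * M))) *
        mgf (fun G : SimpleGraph V => ((G ⊓ H).edgeSet.ncard : ℝ)) G(V, p) (η / 2) :=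
        measure_ge_le_exp_mul_mgf _ (by positivity) .of_finite
    _ ≤ Real.exp (-(η / 2) * ((1 + η) * (p * M))) *
        Real.exp ((η / 2 + (η / 2) ^ 2) * (p * M)) := by gcongr
    _ = Real.exp (-(η ^ 2 / 4 * (p * M))) := by
        rw [← Real.exp_add]
        ring_nf

lemma binomialRandom_real_le_of_containers {η M : ℝ} (hη : 0 ≤ η) (hη2 : η ≤ 2) (p : I)
    (F : Finset (SimpleGraph V)) (hF : ∀ H ∈ F, H.edgeSet.ncard ≤ M) :
    G(V, p).real {G | ∃ G' ≤ G, (1 + η) * (p * M) ≤ (G'.edgeSet.ncard : ℝ) ∧ ∃ H ∈ F, G' ≤ H} ≤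
      F.card * Real.exp (-(η ^ 2 / 4 * (p * M))) := by
  calc _ ≤ G(V, p).real
        (⋃ H ∈ F, {G | (1 + η) * (p * M) ≤ ((G ⊓ H).edgeSet.ncard : ℝ)}) := by
        refine measureReal_mono ?_ (measure_ne_top _ _)
        rintro G ⟨G', hle, hedges, H, hHF, hGH⟩
        refine Set.mem_biUnion hHF (hedges.trans (Nat.cast_le.2 ?_))
        exact Set.ncard_le_ncard (SimpleGraph.edgeSet_mono (le_inf hle hGH)) (Set.toFinite _)
    _ ≤ ∑ H ∈ F, G(V, p).real {G | (1 + η) * (p * M) ≤ ((G ⊓ H).edgeSet.ncard : ℝ)} :=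
        measureReal_biUnion_finset_le _ _
    _ ≤ F.card • Real.exp (-(η ^ 2 / 4 * (p * M))) :=
        Finset.sum_le_card_nsmul _ _ _ fun H hH =>
          binomialRandom_real_le_ncard_edgeSet_inf hη hη2 p (hF H hH)
    _ = F.card * Real.exp (-(η ^ 2 / 4 * (p * M))) := nsmul_eq_mul _ _

end RandomGraph

section RobustCycleLengths

open MeasureTheory unitInterval
open scoped SimpleGraph

/-- Every Hamiltonian subgraph of `G` with more than `M` edges contains a cycle of each length in
the interval `[a, b]`. -/
def HasRobustCycleLengths {V : Type} [Fintype V] [DecidableEq V] (M a b : ℝ) (G : SimpleGraph V) :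
    Prop :=
  ∀ G' : SimpleGraph V, G' ≤ G → G'.IsHamiltonian → M < (G'.edgeSet.ncard : ℝ) →
    ∀ t : ℕ, a ≤ (t : ℝ) → (t : ℝ) ≤ b → HasCycleLength G' t

lemma eventually_exists_block_length {κ : ℝ} (hκ : 0 < κ) :
    ∀ᶠ n : ℕ in atTop, ∃ m : ℕ, 0 < m ∧ (m : ℝ) ≤ κ * n ∧ n / m ≤ ⌈2 / κ⌉₊ := by
  filter_upwards [tendsto_natCast_atTop_atTop.eventually_ge_atTop (2 / κ)] with n hn
  rw [div_le_iff₀ hκ] at hn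
  have hlt : κ * n < ⌊κ * n⌋₊ + 1 := Nat.lt_floor_add_one _
  have hpos : (0 : ℝ) < ⌊κ * n⌋₊ := by linarith
  refine ⟨⌊κ * n⌋₊, by exact_mod_cast hpos, Nat.floor_le (by positivity), ?_⟩
  have hdiv : ((n / ⌊κ * n⌋₊ : ℕ) : ℝ) ≤ ⌈2 / κ⌉₊ :=
    calc ((n / ⌊κ * n⌋₊ : ℕ) : ℝ) ≤ n / ⌊κ * n⌋₊ := Nat.cast_div_le
      _ ≤ 2 / κ := by
        rw [div_le_div_iff₀ hpos hκ]
        linarith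
      _ ≤ ⌈2 / κ⌉₊ := Nat.le_ceil _
  exact_mod_cast hdiv

lemma natCast_pow_mul_two_pow_le_exp (n K : ℕ) :
    (n : ℝ) ^ n * 2 ^ (K * n) ≤ Real.exp (n * Real.log n + K * n) := by
  rcases n.eq_zero_or_pos with rfl | hn
  · simp
  · have htwo : (2 : ℝ) ≤ Real.exp 1 := by linarith [Real.add_one_le_exp (1 : ℝ)]
    calc (n : ℝ) ^ n * 2 ^ (K * n) ≤ (n : ℝ) ^ n * Real.exp 1 ^ (K * n) := by gcongr
      _ = Real.exp (n * Real.log n + K * n) := by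
        rw [Real.exp_add, Real.exp_nat_mul, Real.exp_log (by exact_mod_cast hn),
          ← Real.exp_nat_mul, mul_one, Nat.cast_mul]

lemma eventually_exists_container_family {ε δ : ℝ} (hε : 0 < ε) (hδ : 0 < δ) :
    ∃ K : ℕ, ∀ᶠ n : ℕ in atTop, ∃ F : Finset (SimpleGraph (Fin n)),
      (F.card : ℝ) ≤ Real.exp (n * Real.log n + K * n) ∧
      (∀ H ∈ F, (H.edgeSet.ncard : ℝ) ≤ (1 + ε) * n ^ 2 / 4) ∧
      ∀ G : SimpleGraph (Fin n), G.IsHamiltonian → ∀ t : ℕ, δ * n ≤ t → t ≤ (1 - δ) * n →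
        ¬ HasCycleLength G t → ∃ H ∈ F, G ≤ H := by
  have hκ : 0 < min (ε / 14) (δ / 4) := lt_min (by positivity) (by positivity)
  refine ⟨⌈2 / min (ε / 14) (δ / 4)⌉₊ + 1, ?_⟩
  filter_upwards [eventually_ge_atTop 3, eventually_exists_block_length hκ,
    tendsto_natCast_atTop_atTop.eventually_ge_atTop (4 / δ)] with n hn ⟨m, hm, hmκ, hblocks⟩ hnδ
  have : NeZero n := ⟨by omega⟩
  rw [div_le_iff₀ hδ] at hnδ
  have hmε : 14 * (m : ℝ) ≤ ε * n := by
    have := mul_le_mul_of_nonneg_right (min_le_left (ε / 14) (δ / 4)) n.cast_nonneg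
    linarith
  have hmδ : 4 * (m : ℝ) ≤ δ * n := by
    have := mul_le_mul_of_nonneg_right (min_le_right (ε / 14) (δ / 4)) n.cast_nonneg
    linarith
  obtain ⟨F, hcard, hedges, hF⟩ := exists_container_family hn (Fintype.card_fin n) hm
  refine ⟨F, ?_, fun H hH => ?_, fun G hG t ht_lower ht_upper hcyc => ?_⟩
  · refine le_trans ?_ (natCast_pow_mul_two_pow_le_exp n _)
    have hle : F.card ≤ n ^ n * 2 ^ ((⌈2 / min (ε / 14) (δ / 4)⌉₊ + 1) * n) :=
      hcard.trans (by gcongr; norm_num)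
    exact_mod_cast hle
  · have hH4 : 4 * (H.edgeSet.ncard : ℝ) ≤ n ^ 2 + 14 * m * n := by exact_mod_cast hedges H hH
    have := mul_le_mul_of_nonneg_right hmε n.cast_nonneg
    linarith
  · have hlower : 2 * m + 2 ≤ t := by
      have : (2 * m + 2 : ℝ) ≤ t := by linarith
      exact_mod_cast this
    have hupper : t + 2 * m ≤ n := by
      have : (t + 2 * m : ℝ) ≤ n := by linarith
      exact_mod_cast this
    obtain ⟨τ, rfl⟩ := Nat.exists_eq_add_of_le' (show 2 ≤ t by omega)
    exact hF τ (by omega) (by omega) G hG hcyc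

lemma binomialRandom_real_not_hasRobustCycleLengths_le {ε δ : ℝ} (hε : 0 < ε) (hδ : 0 < δ) :
    ∃ c : ℝ, 0 < c ∧ ∃ K : ℕ, ∀ᶠ n : ℕ in atTop, ∀ p : I,
      G(Fin n, p).real {G | HasRobustCycleLengths
        ((1 / 2 + ε) * (n ^ 2 * p / 2)) (δ * n) ((1 - δ) * n) G}ᶜ ≤
      Real.exp (n * Real.log n + K * n - c * (p * n ^ 2)) := by
  obtain ⟨K, hK⟩ := eventually_exists_container_family hε hδ
  refine ⟨ε ^ 2 / (16 * (1 + ε)), by positivity, K, hK.mono ?_⟩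
  rintro n ⟨F, hcard, hedges, hF⟩ p
  have hη : ε / (1 + ε) ≤ 2 := by
    rw [div_le_iff₀ (by positivity)]
    linarith
  have hthreshold : (1 + ε / (1 + ε)) * (p * ((1 + ε) * n ^ 2 / 4)) =
      (1 / 2 + ε) * (n ^ 2 * p / 2) := by
    field_simp
    ring
  have hexponent : (ε / (1 + ε)) ^ 2 / 4 * (p * ((1 + ε) * n ^ 2 / 4)) =
      ε ^ 2 / (16 * (1 + ε)) * (p * n ^ 2) := by
    field_simp
    ring
  have hunion := binomialRandom_real_le_of_containers (by positivity) hη p F hedges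
  rw [hthreshold, hexponent] at hunion
  calc _ ≤ _ := by
        refine measureReal_mono (fun G hG => ?_) (measure_ne_top _ _)
        simp only [HasRobustCycleLengths, Set.mem_compl_iff, Set.mem_ofPred_eq, not_forall] at hG
        obtain ⟨G', hle, hham, hlt, t, ht_lower, ht_upper, hcyc⟩ := hG
        exact ⟨G', hle, hlt.le, hF G' hham t ht_lower ht_upper hcyc⟩
    _ ≤ _ := hunion
    _ ≤ Real.exp (n * Real.log n + K * n) * Real.exp (-(ε ^ 2 / (16 * (1 + ε)) * (p * n ^ 2))) := by
        gcongr
    _ = _ := by rw [← Real.exp_add, ← sub_eq_add_neg]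

lemma eventually_le_gnpProb_hasRobustCycleLengths {ε δ : ℝ} (hε : 0 < ε) (hδ : 0 < δ) :
    ∃ C : ℝ, 0 < C ∧ ∀ᶠ n : ℕ in atTop, ∀ p : I, C * Real.log n / n ≤ p →
      1 - Real.exp (-n) ≤ gnpProb (Fin n) p (HasRobustCycleLengths
        ((1 / 2 + ε) * (n ^ 2 * p / 2)) (δ * n) ((1 - δ) * n)) := by
  obtain ⟨c, hc, K, hfail⟩ := binomialRandom_real_not_hasRobustCycleLengths_le hε hδ
  refine ⟨2 / c, by positivity, ?_⟩
  filter_upwards [hfail, eventually_gt_atTop 0,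
    (Real.tendsto_log_atTop.comp tendsto_natCast_atTop_atTop).eventually_ge_atTop ((K : ℝ) + 1)]
    with n hfail hn hlog p hp
  have : (0 : ℝ) < n := by exact_mod_cast hn
  have hchernoff : 2 * (n * Real.log n) ≤ c * (p * n ^ 2) :=
    calc 2 * (n * Real.log n) = c * (2 / c * Real.log n / n * n ^ 2) := by field_simp
      _ ≤ c * (p * n ^ 2) := by gcongr
  have hlog : n * ((K : ℝ) + 1) ≤ n * Real.log n := by gcongr; exact hlog
  have hexp : n * Real.log n + K * n - c * (p * n ^ 2) ≤ -n := by linarith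
  have hcompl := (hfail p).trans (Real.exp_le_exp.2 hexp)
  rw [probReal_compl_eq_one_sub .of_discrete, ← gnpProb_eq_binomialRandom_real] at hcompl
  linarith

theorem medium_cycles_general (ε δ : ℝ) (hε : 0 < ε) (hδ : 0 < δ) :
    ∃ C : ℝ, 0 < C ∧ ∀ p : ℕ → ℝ,
      (∀ᶠ n : ℕ in atTop, C * Real.log n / n ≤ p n) → (∀ᶠ n in atTop, p n ≤ 1) →
      Tendsto (fun n : ℕ => gnpProb (Fin n) (p n) (HasRobustCycleLengths
        ((1/2 + ε) * ((n : ℝ)^2 * p n / 2)) (δ * n) ((1 - δ) * n))) atTop (𝓝 1) := by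
  obtain ⟨C, hC, hbound⟩ := eventually_le_gnpProb_hasRobustCycleLengths hε hδ
  refine ⟨C, hC, fun p hp_lower hp_upper => ?_⟩
  have hlim : Tendsto (fun n : ℕ => 1 - Real.exp (-(n : ℝ))) atTop (𝓝 1) := by
    simpa using (Real.tendsto_exp_neg_atTop_nhds_zero.comp tendsto_natCast_atTop_atTop).const_sub 1
  have hp : ∀ᶠ n : ℕ in atTop, p n ∈ I := by
    filter_upwards [hp_lower, hp_upper] with n hlower hupper
    exact ⟨le_trans (by positivity) hlower, hupper⟩
  refine tendsto_of_tendsto_of_tendsto_of_le_of_le' hlim tendsto_const_nhds ?_ ?_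
  · filter_upwards [hbound, hp, hp_lower] with n hn hpn hlower
    exact hn ⟨p n, hpn⟩ hlower
  · filter_upwards [hp] with n hpn
    exact gnpProb_le_one ⟨p n, hpn⟩ _

lemma eventually_mul_log_div_le_rpow (C : ℝ) :
    ∀ᶠ n : ℕ in atTop, C * Real.log n / n ≤ (n : ℝ) ^ (-(1/2) : ℝ) := by
  have hlog : ∀ᶠ x : ℝ in atTop, C * Real.log x ≤ x ^ (1/2 : ℝ) := by
    have ho := ((isLittleO_log_rpow_atTop (show (0 : ℝ) < 1/2 by norm_num)).const_mul_left C).bound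
      one_pos
    filter_upwards [ho, eventually_ge_atTop 0] with x hx hx0
    calc C * Real.log x ≤ ‖C * Real.log x‖ := Real.le_norm_self _
      _ ≤ 1 * ‖x ^ (1/2 : ℝ)‖ := hx
      _ = x ^ (1/2 : ℝ) := by rw [one_mul, Real.norm_of_nonneg (by positivity)]
  filter_upwards [tendsto_natCast_atTop_atTop.eventually hlog, eventually_gt_atTop 0] with n hn hn0
  have hn0 : (0 : ℝ) < n := by exact_mod_cast hn0
  calc C * Real.log n / n ≤ (n : ℝ) ^ (1/2 : ℝ) / n := by gcongr
    _ = (n : ℝ) ^ (-(1/2) : ℝ) := by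
      rw [← Real.rpow_sub_one hn0.ne']
      norm_num

end RobustCycleLengths

/-- For all ε > 0 and δ > 0 there exists a constant C such that if p = p(n) ≥ C·n^(-1/2),
then G(n,p) a.a.s. satisfies: every Hamiltonian subgraph G' with more than (1/2 + ε)·n²p/2
edges contains a cycle of length t for all integers t ∈ [δn, (1−δ)n]. -/
theorem medium_cycles (ε δ : ℝ) (hε : 0 < ε) (hδ : 0 < δ) :
    ∃ C : ℝ, 0 < C ∧ ∀ p : ℕ → ℝ,
      (∀ n : ℕ, C * (n : ℝ) ^ (-(1/2) : ℝ) ≤ p n) → (∀ n : ℕ, p n ≤ 1) →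
      Filter.Tendsto
        (fun n : ℕ => gnpProb (Fin n) (p n) (fun G =>
          ∀ G' : SimpleGraph (Fin n), G' ≤ G → G'.IsHamiltonian →
            (1/2 + ε) * ((n : ℝ)^2 * p n / 2) < (G'.edgeSet.ncard : ℝ) →
            ∀ t : ℕ, δ * n ≤ (t : ℝ) → (t : ℝ) ≤ (1 - δ) * n →
              HasCycleLength G' t))
        Filter.atTop (nhds 1) := by
  obtain ⟨C, -, hC⟩ := medium_cycles_general ε δ hε hδ
  -- A constant above `1` would exclude every `p`, since `p 1 ≤ 1`.
  refine ⟨1, one_pos, fun p hp_lower hp_upper => hC p ?_ (.of_forall hp_upper)⟩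
  exact (eventually_mul_log_div_le_rpow C).mono fun n hn => hn.trans (by simpa using hp_lower n)
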